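/- There exists a 2-(24,4,1) packing with 42 blocks whose leave is a vertex-disjoint union of three cycles of length 3 and one cycle of length 15, covering all 24 points (leave type 3^3 15^1). -/

import Mathlib

/-!
The packing is explicit. On the points `0, …, 23`, the leave is prescribed to be the triangles
`{0, 1, 2}`, `{3, 4, 5}`, `{6, 7, 8}` and the 15-cycle `9, 10, …, 23`. The permutation `σ` that
rotates each triangle by one step and the 15-cycle by five steps preserves this graph, so one may
look for a packing invariant under `σ`. Since `σ` has only 3-cycles, it fixes no 4-set, and the
42 blocks form 14 orbits of size three; these cover each of the `276 - 24 = 252 = 42 * 6` pairs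
outside the prescribed leave exactly once. Everything is then a finite verification:
`blockList_pairwise` (distinct blocks share at most one point) gives the packing property, and
`blockList_leave` identifies the uncovered pairs with the edges of the four cycles.
-/

/-- A 2-(24,4,1) packing: a collection of 4-element blocks on 24 points such that
every pair of distinct points lies in at most one block. -/
def IsPacking (B : Finset (Finset (Fin 24))) : Prop :=
  (∀ b ∈ B, b.card = 4) ∧
  ∀ p q : Fin 24, p ≠ q → ∀ b₁ ∈ B, ∀ b₂ ∈ B,
    p ∈ b₁ → q ∈ b₁ → p ∈ b₂ → q ∈ b₂ → b₁ = b₂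

/-- Adjacency in the leave of a packing: the pair of distinct points is covered by no block. -/
def LeaveAdj (B : Finset (Finset (Fin 24))) (p q : Fin 24) : Prop :=
  p ≠ q ∧ ∀ b ∈ B, ¬ (p ∈ b ∧ q ∈ b)

/-- The leave of the packing `B` is a vertex-disjoint union of cycles whose lengths are
given by the list `L`, covering all 24 points. -/
def LeaveIsCycleType (B : Finset (Finset (Fin 24))) (L : List ℕ) : Prop :=
  ∃ f : (i : Fin L.length) → ZMod (L.get i) → Fin 24,
    Function.Bijective (fun x : Σ i : Fin L.length, ZMod (L.get i) => f x.1 x.2) ∧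
    ∀ p q : Fin 24, LeaveAdj B p q ↔
      ∃ i k, (p = f i k ∧ q = f i (k + 1)) ∨ (q = f i k ∧ p = f i (k + 1))

/-- The 42 blocks; each line is one orbit of `σ`, the permutation rotating the triangles
`{0, 1, 2}`, `{3, 4, 5}`, `{6, 7, 8}` by one step and the cycle `9, …, 23` by five steps.
Lists rather than finsets are used so that the kernel can evaluate the checks quickly. -/
def blockList : List (List (Fin 24)) :=
  [[0, 3, 6, 15], [1, 4, 7, 20], [2, 5, 8, 10],
   [0, 4, 9, 21], [1, 5, 11, 14], [2, 3, 16, 19],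
   [0, 5, 12, 17], [1, 3, 17, 22], [2, 4, 12, 22],
   [0, 7, 14, 23], [1, 8, 13, 19], [2, 6, 9, 18],
   [0, 8, 16, 20], [1, 6, 10, 21], [2, 7, 11, 15],
   [0, 10, 19, 22], [1, 9, 12, 15], [2, 14, 17, 20],
   [0, 11, 13, 18], [1, 16, 18, 23], [2, 13, 21, 23],
   [3, 7, 10, 13], [4, 8, 15, 18], [5, 6, 20, 23],
   [3, 8, 12, 23], [4, 6, 13, 17], [5, 7, 18, 22],
   [3, 9, 11, 20], [4, 10, 14, 16], [5, 15, 19, 21],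
   [3, 14, 18, 21], [4, 11, 19, 23], [5, 9, 13, 16],
   [6, 11, 16, 22], [7, 12, 16, 21], [8, 11, 17, 21],
   [6, 12, 14, 19], [7, 9, 17, 19], [8, 9, 14, 22],
   [10, 12, 18, 20], [10, 15, 17, 23], [13, 15, 20, 22]]

/-- The blocks of `blockList` as a finset of finsets. -/
def witnessBlocks : Finset (Finset (Fin 24)) :=
  (blockList.map List.toFinset).toFinset

/-- Parametrization of the cycles of the leave. The cycles of lengths 3, 3, 3, 15 start at the
points 0, 3, 6, 9, that is, the `i`-th one at `3 * i`, and run through consecutive points. -/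
def witnessCycle (i : Fin [3, 3, 3, 15].length) (k : ZMod ([3, 3, 3, 15].get i)) : Fin 24 :=
  Fin.ofNat 24 (3 * i.val + k.val)

instance witnessNeZero : ∀ i : Fin [3, 3, 3, 15].length, NeZero ([3, 3, 3, 15].get i) := by
  intro i
  exact ⟨by revert i; decide⟩

theorem blockList_nodup : ∀ l ∈ blockList, l.Nodup ∧ l.length = 4 := by
  decide +kernel

theorem blockList_pairwise :
    blockList.Pairwise (fun l m => (l.filter (fun p => decide (p ∈ m))).length ≤ 1) := by
  decide +kernel

theorem witnessCycle_bijective :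
    Function.Bijective
      (fun x : Σ i : Fin [3, 3, 3, 15].length, ZMod ([3, 3, 3, 15].get i) =>
        witnessCycle x.1 x.2) := by
  decide +kernel

theorem blockList_leave : ∀ p q : Fin 24,
    (p ≠ q ∧ ∀ l ∈ blockList, ¬ (p ∈ l ∧ q ∈ l)) ↔
      ∃ i k, (p = witnessCycle i k ∧ q = witnessCycle i (k + 1)) ∨
        (q = witnessCycle i k ∧ p = witnessCycle i (k + 1)) := by
  decide +kernel

theorem mem_witnessBlocks {b : Finset (Fin 24)} :
    b ∈ witnessBlocks ↔ ∃ l ∈ blockList, l.toFinset = b := by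
  simp [witnessBlocks]

theorem blockList_toFinset_card {l : List (Fin 24)} (hl : l ∈ blockList) :
    l.toFinset.card = 4 := by
  rw [List.toFinset_card_of_nodup (blockList_nodup l hl).1, (blockList_nodup l hl).2]

theorem blockList_pairwise_inter :
    blockList.Pairwise (fun l m => (l.toFinset ∩ m.toFinset).card ≤ 1) := by
  refine blockList_pairwise.imp fun {l m} h => ?_
  have hlm : l.toFinset ∩ m.toFinset = (l.filter (fun p => decide (p ∈ m))).toFinset := by
    ext p
    simp
  rw [hlm]
  exact (List.toFinset_card_le _).trans h

theorem witness_card : witnessBlocks.card = 42 := by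
  have hnodup : (blockList.map List.toFinset).Nodup := by
    refine List.pairwise_map.mpr (blockList_pairwise_inter.imp_of_mem ?_)
    intro l m hl hm h heq
    -- Equal blocks would meet in four points.
    rw [heq, Finset.inter_self, blockList_toFinset_card hm] at h
    omega
  rw [witnessBlocks, List.toFinset_card_of_nodup hnodup, List.length_map]
  rfl

theorem witness_isPacking : IsPacking witnessBlocks := by
  constructor
  · intro b hb
    obtain ⟨l, hl, rfl⟩ := mem_witnessBlocks.mp hb
    exact blockList_toFinset_card hl
  · intro p q hpq b₁ h₁ b₂ h₂ hp₁ hq₁ hp₂ hq₂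
    obtain ⟨l, hl, rfl⟩ := mem_witnessBlocks.mp h₁
    obtain ⟨m, hm, rfl⟩ := mem_witnessBlocks.mp h₂
    by_contra hne
    have hinter : (l.toFinset ∩ m.toFinset).card ≤ 1 := by
      have : Std.Symm (fun l m : List (Fin 24) => (l.toFinset ∩ m.toFinset).card ≤ 1) :=
        ⟨fun l m h => by rwa [Finset.inter_comm]⟩
      exact blockList_pairwise_inter.forall hl hm (fun h => hne (congrArg List.toFinset h))
    exact hpq (Finset.card_le_one.mp hinter p (Finset.mem_inter.mpr ⟨hp₁, hp₂⟩) q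
      (Finset.mem_inter.mpr ⟨hq₁, hq₂⟩))

theorem witness_leave (p q : Fin 24) :
    LeaveAdj witnessBlocks p q ↔ p ≠ q ∧ ∀ l ∈ blockList, ¬ (p ∈ l ∧ q ∈ l) := by
  simp [LeaveAdj, mem_witnessBlocks]

/-- There is a 2-(24,4,1) packing with 42 blocks whose leave is a vertex-disjoint
union of cycles of lengths [3, 3, 3, 15], covering all 24 points. -/
theorem exists_max_packing_with_leave_type :
    ∃ B : Finset (Finset (Fin 24)), IsPacking B ∧ B.card = 42 ∧
      LeaveIsCycleType B [3, 3, 3, 15] :=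
  ⟨witnessBlocks, witness_isPacking, witness_card, witnessCycle, witnessCycle_bijective,
    fun p q => (witness_leave p q).trans (blockList_leave p q)⟩
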